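/- (Step in the proof of Proposition 3.1: representing morphisms in the derived category by monomorphisms of complexes of injectives) Let 𝒜 be an abelian category with enough injectives. Then every morphism φ : K → L in the bounded-below derived category D⁺(𝒜) can be represented by a degreewise monomorphism of complexes of injectives: there exist bounded-below cochain complexes I and J whose components are injective objects of 𝒜, a morphism of complexes f : I → J which is a monomorphism in every degree, and isomorphisms α : K ≅ I and β : L ≅ J in D⁺(𝒜) such that β ∘ φ = Q(f) ∘ α, where Q denotes the localization functor from complexes to D⁺(𝒜). -/

import Mathlib

open CategoryTheory CategoryTheory.Limits

/-- (Step in the proof of Proposition 3.1: representing morphisms in the derived category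
by monomorphisms of complexes of injectives.)  Let `𝒜` be an abelian category with enough
injectives.  Every morphism `φ : K ⟶ L` in the derived category between bounded-below
complexes can be represented by a degreewise monomorphism of bounded-below complexes of
injectives: there exist bounded-below cochain complexes `I` and `J` with injective
components, a morphism of complexes `f : I ⟶ J` which is a monomorphism in every degree,
and isomorphisms `α : Q K ≅ Q I`, `β : Q L ≅ Q J` in the derived category such that
`φ ≫ β = α ≫ Q f`. -/
theorem derivedCategory_hom_rep_mono_injectives {C : Type*} [Category C] [Abelian C]
    [EnoughInjectives C] [HasDerivedCategory C]
    (K L : CochainComplex C ℤ)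
    (hK : ∃ n : ℤ, ∀ i < n, IsZero (K.X i)) (hL : ∃ n : ℤ, ∀ i < n, IsZero (L.X i))
    (φ : DerivedCategory.Q.obj K ⟶ DerivedCategory.Q.obj L) :
    ∃ (I J : CochainComplex C ℤ) (f : I ⟶ J),
      (∃ n : ℤ, ∀ i < n, IsZero (I.X i)) ∧ (∀ i : ℤ, Injective (I.X i)) ∧
      (∃ n : ℤ, ∀ i < n, IsZero (J.X i)) ∧ (∀ i : ℤ, Injective (J.X i)) ∧
      (∀ i : ℤ, Mono (f.f i)) ∧
      ∃ (α : DerivedCategory.Q.obj K ≅ DerivedCategory.Q.obj I)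
        (β : DerivedCategory.Q.obj L ≅ DerivedCategory.Q.obj J),
        φ ≫ β.hom = α.hom ≫ DerivedCategory.Q.map f := by
  classical
  obtain ⟨a, ha⟩ := hK
  obtain ⟨b, hb⟩ := hL
  have : K.IsStrictlyGE a := by
    rw [CochainComplex.isStrictlyGE_iff]; exact ha
  have : L.IsStrictlyGE b := by
    rw [CochainComplex.isStrictlyGE_iff]; exact hb
  obtain ⟨I, iK, _, hI, _⟩ := CochainComplex.Plus.modelCategoryQuillen.exists_quasiIso_injective K a
  obtain ⟨J₀, iL, _, hJ₀, _⟩ := CochainComplex.Plus.modelCategoryQuillen.exists_quasiIso_injective L b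
  have : J₀.IsKInjective := CochainComplex.isKInjective_of_injective J₀ b
  obtain ⟨g', hg'⟩ := (CochainComplex.IsKInjective.Qh_map_bijective
    ((HomotopyCategory.quotient _ _).obj I) J₀).surjective
    ((DerivedCategory.quotientCompQhIso C).hom.app I ≫ inv (DerivedCategory.Q.map iK) ≫ φ ≫
      DerivedCategory.Q.map iL ≫ (DerivedCategory.quotientCompQhIso C).inv.app J₀)
  obtain ⟨g, rfl⟩ := (HomotopyCategory.quotient _ _).map_surjective g'
  have hg : φ ≫ DerivedCategory.Q.map iL =
      DerivedCategory.Q.map iK ≫ DerivedCategory.Q.map g := by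
    have h := (DerivedCategory.quotientCompQhIso C).hom.naturality g
    dsimp at h
    rw [hg'] at h
    simp only [Category.assoc, Iso.inv_hom_id_app] at h
    rw [cancel_epi] at h
    rw [← h]
    simp
  obtain ⟨d, _, _⟩ : ∃ (d : ℤ), I.IsStrictlyGE (d + 1) ∧ J₀.IsStrictlyGE d :=
    ⟨min (a - 1) b, I.isStrictlyGE_of_ge _ a (by grind), J₀.isStrictlyGE_of_ge _ b (by simp)⟩
  obtain ⟨J, _, f, p, _, hp, _, rfl⟩ := CochainComplex.cm5b g d
  have hJ : ∀ n, Injective (J.X n) := by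
    have h0 : CochainComplex.degreewiseEpiWithInjectiveKernel (0 : J₀ ⟶ HomologicalComplex.zero) :=
      (CochainComplex.degreewiseEpiWithInjectiveKernel_iff_of_isZero _ HomologicalComplex.isZero_zero).2 hJ₀
    exact (CochainComplex.degreewiseEpiWithInjectiveKernel_iff_of_isZero _ HomologicalComplex.isZero_zero).1
      (MorphismProperty.comp_mem _ _ _ hp h0)
  refine ⟨I, J, f, ⟨a, fun i hi => I.isZero_of_isStrictlyGE a i hi⟩, hI,
    ⟨d, fun i hi => J.isZero_of_isStrictlyGE d i hi⟩, hJ, fun i => inferInstance,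
    asIso (DerivedCategory.Q.map iK),
    asIso (DerivedCategory.Q.map iL) ≪≫ (asIso (DerivedCategory.Q.map p)).symm, ?_⟩
  rw [← cancel_mono (DerivedCategory.Q.map p)]
  simpa using hg
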